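/- Let E be a finite group and Z a subgroup of the center of E such that the quotient E/Z is abelian and the orders |Z| and [E:Z] are coprime. Then there exists a subgroup H of E with Z ∩ H = {1} and E = ZH (so E is the internal direct product of Z and H), and the quotient map E → E/Z restricts to an isomorphism from H onto E/Z. -/

import Mathlib

/-- Let `E` be a finite group and `Z` a subgroup of the center of `E` such that `E/Z` is
abelian and `|Z|` and `[E:Z]` are coprime. Then there exists a subgroup `H` of `E` with
`Z ∩ H = 1` and `E = ZH`, and the quotient map `E → E/Z` restricts to an isomorphism
from `H` onto `E/Z`. -/
theorem stmt5 {E : Type*} [Group E] [Finite E] (Z : Subgroup E) [Z.Normal]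
    (hZ : Z ≤ Subgroup.center E)
    (hab : ∀ a b : E ⧸ Z, a * b = b * a)
    (hcop : Nat.Coprime (Nat.card Z) Z.index) :
    ∃ H : Subgroup E, Z ⊓ H = ⊥ ∧ Z ⊔ H = ⊤ ∧
      Function.Bijective (fun h : H => (QuotientGroup.mk (h : E) : E ⧸ Z)) := by
  obtain ⟨H, hH⟩ := Subgroup.exists_right_complement'_of_coprime hcop
  refine ⟨H, hH.isCompl.inf_eq_bot, hH.isCompl.sup_eq_top, ?_, ?_⟩
  · intro a b hab
    have hmem : (a : E)⁻¹ * b ∈ Z := QuotientGroup.eq.mp hab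
    have hbot : (a : E)⁻¹ * b ∈ Z ⊓ H := ⟨hmem, H.mul_mem (H.inv_mem a.2) b.2⟩
    rw [hH.isCompl.inf_eq_bot, Subgroup.mem_bot, inv_mul_eq_one] at hbot
    exact Subtype.ext hbot
  · intro q
    obtain ⟨e, rfl⟩ := QuotientGroup.mk_surjective q
    obtain ⟨⟨h, z⟩, rfl⟩ := hH.symm.2 e
    exact ⟨h, QuotientGroup.eq.mpr (by simp)⟩
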